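/- arXiv:1310.0650 — 2 statements merged into one kernel-verified Lean document; each statement's English description precedes it below -/
import Mathlib

section
/- Let X ⊆ {0,1}^ℤ be a nonempty two-directional binary subshift. Then W(X) = {the constant configuration ⋯AAA⋯} if and only if X is periodic, i.e., there exists p ≥ 1 such that σ^p(x) = x for every x ∈ X. -/
/-!
Word games (Salo–Törmä, "Playing with Subshifts").
The players' alphabet is `Bool`: player `A` is `false`, player `B` is `true`
(so that the order `A < B` is the order `false < true` on `Bool`).
-/

/-- Auxiliary function for the play of a finite ordered word game: the word built so far
is accumulated in the second argument, and at each step the player indicated by the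
turn order picks the next letter as a function of the word built so far. -/
def playAux {S : Type*} (sA sB : List S → S) : List Bool → List S → List S
  | [], w => w
  | b :: rest, w => playAux sA sB rest (w ++ [(if b then sB else sA) w])

/-- The play of the finite ordered word game with turn order `a`,
where `A` uses strategy `sA` and `B` uses strategy `sB`. -/
def play {S : Type*} (sA sB : List S → S) (a : List Bool) : List S :=
  playAux sA sB a []

/-- The winning set `W(X)` of a target set `X` of finite words: the set of turn orders
for which `A` has a winning strategy. -/
def Wset {S : Type*} (X : Set (List S)) : Set (List Bool) :=
  { a | ∃ sA : List S → S, ∀ sB : List S → S, play sA sB a ∈ X }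

/-- The shift map on two-directional configurations. -/
def shiftZ {S : Type*} (x : ℤ → S) : ℤ → S := fun i => x (i + 1)

/-- `occursZ w x` means that the finite word `w` occurs as a factor of the
two-directional configuration `x`. -/
def occursZ {S : Type*} (w : List S) (x : ℤ → S) : Prop :=
  ∃ i : ℤ, w = List.ofFn fun j : Fin w.length => x (i + j.val)

/-- The language `B(X)` of a set of two-directional configurations. -/
def langZ {S : Type*} (X : Set (ℤ → S)) : Set (List S) :=
  { w | ∃ x ∈ X, occursZ w x }

/-- The winning shift of a two-directional subshift `X`: all configurations in
`{A,B}^ℤ` whose every finite factor lies in the winning set `W(B(X))`. -/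
def WShiftZ {S : Type*} (X : Set (ℤ → S)) : Set (ℤ → Bool) :=
  { a | ∀ w : List Bool, occursZ w a → w ∈ Wset (langZ X) }

def preZ (x : ℤ → Bool) (n : ℕ) : List Bool := (List.range n).map fun j : ℕ => x (j : ℤ)

theorem preZ_succ (x : ℤ → Bool) (n : ℕ) : preZ x (n + 1) = preZ x n ++ [x (n : ℤ)] := by
  simp [preZ, List.range_succ]

theorem preZ_length (x : ℤ → Bool) (n : ℕ) : (preZ x n).length = n := by simp [preZ]

theorem preZ_mem (X : Set (ℤ → Bool)) (x : ℤ → Bool) (hx : x ∈ X) (n : ℕ) :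
    preZ x n ∈ langZ X := by
  refine ⟨x, hx, 0, ?_⟩
  apply List.ext_getElem
  · simp
  · intro i h1 h2
    simp [preZ]

theorem play_two (x y : ℤ → Bool) (sA sB : List Bool → Bool)
    (hsA : ∀ u, sA u = if u = preZ x u.length then x (u.length : ℤ) else y (u.length : ℤ))
    (a : List Bool) : ∀ (n : ℕ) (w : List Bool), (w = preZ x n ∨ w = preZ y n) →
    (∀ k, a[k]? = some true → preZ x (n + k) = preZ y (n + k) ∧
      x ((n + k : ℕ) : ℤ) ≠ y ((n + k : ℕ) : ℤ)) →
    (playAux sA sB a w = preZ x (n + a.length) ∨ playAux sA sB a w = preZ y (n + a.length)) := by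
  induction a with
  | nil => intro n w hw _; simpa [playAux] using hw
  | cons b rest ih =>
    intro n w hw h
    have hlen : w.length = n := by rcases hw with rfl | rfl <;> exact preZ_length _ _
    have key := ih (n + 1) (w ++ [(if b then sB else sA) w]) ?_ ?_
    · simp only [playAux, List.length_cons]
      rw [show n + (rest.length + 1) = n + 1 + rest.length by omega]
      exact key
    · rw [preZ_succ, preZ_succ]
      cases b with
      | false =>
        simp only [Bool.false_eq_true, if_false]
        rw [hsA, hlen]
        split_ifs with hc
        · left; rw [← hc]
        · right
          rcases hw with hw | hw
          · exact absurd hw hc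
          · rw [← hw]
      | true =>
        obtain ⟨h1, h2⟩ := h 0 (by simp)
        simp only [add_zero] at h1 h2
        have hwx : w = preZ x n := by
          rcases hw with hw | hw
          · exact hw
          · rw [hw, h1]
        simp only [if_true]
        rw [← h1, ← hwx]
        have : sB w = x n ∨ sB w = y n := by
          revert h2
          cases sB w <;> cases x n <;> cases y n <;> simp
        rcases this with h | h
        · left; rw [h]
        · right; rw [h]
    · intro k hk
      have := h (k + 1) (by simpa using hk)
      rw [show n + 1 + k = n + (k + 1) by omega]
      exact this

theorem mem_Wset_two (X : Set (ℤ → Bool)) (x y : ℤ → Bool) (hx : x ∈ X) (hy : y ∈ X)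
    (a : List Bool)
    (h : ∀ k, a[k]? = some true → preZ x k = preZ y k ∧ x (k : ℤ) ≠ y (k : ℤ)) :
    a ∈ Wset (langZ X) := by
  refine ⟨fun u => if u = preZ x u.length then x (u.length : ℤ) else y (u.length : ℤ), ?_⟩
  intro sB
  have := play_two x y _ sB (fun u => rfl) a 0 [] (Or.inl (by simp [preZ]))
    (by simpa using h)
  unfold play
  rcases this with h | h <;> rw [h]
  · exact preZ_mem X x hx _
  · exact preZ_mem X y hy _

theorem playAux_append (sA sB : List Bool → Bool) (a b : List Bool) : ∀ w,
    playAux sA sB (a ++ b) w = playAux sA sB b (playAux sA sB a w) := by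
  induction a with
  | nil => intro w; rfl
  | cons c r ih => intro w; simp only [List.cons_append, playAux]; exact ih _

theorem playAux_length (sA sB : List Bool → Bool) (a : List Bool) : ∀ w,
    (playAux sA sB a w).length = w.length + a.length := by
  induction a with
  | nil => intro w; rfl
  | cons c r ih => intro w; simp only [playAux, ih]; simp; omega

theorem playAux_congr (sA sB sB' : List Bool → Bool) (a : List Bool) : ∀ w,
    (∀ u, u.length < w.length + a.length → sB u = sB' u) →
    playAux sA sB a w = playAux sA sB' a w := by
  induction a with
  | nil => intro w _; rfl
  | cons c r ih =>
    intro w h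
    simp only [playAux]
    have : (if c then sB else sA) w = (if c then sB' else sA) w := by
      cases c
      · rfl
      · exact h w (by simp)
    rw [this]
    apply ih
    intro u hu
    apply h
    simp at hu ⊢
    omega

theorem lang_periodic (X : Set (ℤ → Bool)) (p : ℕ) (hp : 1 ≤ p)
    (hX : ∀ x ∈ X, (fun i => x (i + (p : ℤ))) = x) (u : List Bool) (hu : u.length = p) (b : Bool)
    (h : u ++ [b] ∈ langZ X) : u[0]? = some b := by
  obtain ⟨x, hx, i, hi⟩ := h
  have e : ∀ k, k < p + 1 → (u ++ [b])[k]? = some (x (i + k)) := by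
    intro k hk
    rw [hi]
    rw [List.getElem?_ofFn]
    simp [hu, hk]
  have e0 := e 0 (by omega)
  have ep := e p (by omega)
  rw [List.getElem?_append_left (by omega)] at e0
  rw [List.getElem?_append_right (by omega)] at ep
  simp [hu] at ep
  have := congrFun (hX x hx) i
  rw [e0, ep, this]
  simp

theorem shift_mem (X : Set (ℤ → Bool)) (hXsh : shiftZ '' X = X) (x : ℤ → Bool) (hx : x ∈ X)
    (i : ℤ) : (fun j => x (j + i)) ∈ X := by
  induction i using Int.induction_on with
  | zero => simpa using hx
  | succ n ih =>
    rw [← hXsh]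
    refine ⟨_, ih, ?_⟩
    funext j
    simp only [shiftZ]
    congr 1; ring
  | pred n ih =>
    rw [← hXsh] at ih
    obtain ⟨y, hy, hyx⟩ := ih
    convert hy using 1
    funext j
    have := congrFun hyx (j - 1)
    simp only [shiftZ, sub_add_cancel] at this
    rw [this]
    congr 1; ring

theorem periodic_of_det (X : Set (ℤ → Bool)) (hXsh : shiftZ '' X = X) (m : ℕ)
    (H : ∀ x ∈ X, ∀ y ∈ X, (∀ j : ℕ, j < m → x j = y j) → x m = y m) :
    ∃ p : ℕ, 1 ≤ p ∧ ∀ x ∈ X, (fun i => x (i + (p : ℤ))) = x := by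
  classical
  let wd : X → (Fin (m + 1) → Bool) := fun x j => x.1 (j.val : ℤ)
  let sh : X → X := fun x => ⟨fun j => x.1 (j + 1), shift_mem X hXsh x.1 x.2 1⟩
  let T := Set.range wd
  have hdet : ∀ x y : X, wd x = wd y → wd (sh x) = wd (sh y) := by
    intro x y hxy
    have hj : ∀ j : ℕ, j < m + 1 → x.1 j = y.1 j := fun j hj => congrFun hxy ⟨j, hj⟩
    funext ⟨j, hjm⟩
    change x.1 ((j : ℤ) + 1) = y.1 ((j : ℤ) + 1)
    by_cases hlt : j < m
    · have := hj (j + 1) (by omega)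
      push_cast at this
      exact this
    · have hjm' : j = m := by omega
      subst hjm'
      refine H (sh x).1 (sh x).2 (sh y).1 (sh y).2 ?_
      intro k hk
      have := hj (k + 1) (by omega)
      push_cast at this
      exact this
  let f : T → T := fun w => ⟨wd (sh w.2.choose), ⟨_, rfl⟩⟩
  let g : X → T := fun x => ⟨wd x, ⟨x, rfl⟩⟩
  have hf : ∀ x, f (g x) = g (sh x) := by
    intro x
    apply Subtype.ext
    apply hdet
    exact (g x).2.choose_spec
  have hsurj : Function.Surjective f := by
    rintro ⟨_, ⟨x, rfl⟩⟩
    refine ⟨g ⟨fun j => x.1 (j + (-1)), shift_mem X hXsh x.1 x.2 (-1)⟩, ?_⟩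
    rw [hf]
    apply Subtype.ext
    funext j
    simp [g, wd, sh]
  have hbij : Function.Bijective f := ⟨Finite.injective_iff_surjective.2 hsurj, hsurj⟩
  let e : Equiv.Perm T := Equiv.ofBijective f hbij
  refine ⟨orderOf e, orderOf_pos e, ?_⟩
  have hpow : ∀ n : ℕ, ∀ x : X, (e ^ n) (g x) = g ⟨fun j => x.1 (j + n), shift_mem X hXsh x.1 x.2 n⟩ := by
    intro n
    induction n with
    | zero => intro x; simp
    | succ n ih =>
      intro x
      rw [pow_succ', Equiv.Perm.mul_apply, ih]
      change f _ = _
      rw [hf]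
      apply Subtype.ext
      funext j
      change x.1 _ = x.1 _
      push_cast; ring_nf
  intro x hx
  funext i
  have := hpow (orderOf e) ⟨_, shift_mem X hXsh x hx i⟩
  rw [pow_orderOf_eq_one] at this
  have h0 := congrFun (congrArg Subtype.val this) ⟨0, by omega⟩
  simp [g, wd] at h0
  rw [h0, add_comm]

/-- A nonempty two-directional binary subshift `X ⊆ {0,1}^ℤ`
(letters `0`, `1` encoded as `false`, `true`) has winning shift equal to the single
all-`A` configuration if and only if `X` is periodic. -/
theorem winningShift_singleton_iff_periodic (X : Set (ℤ → Bool))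
    (hne : X.Nonempty) (hXcl : IsClosed X) (hXsh : shiftZ '' X = X) :
    WShiftZ X = ({fun _ => false} : Set (ℤ → Bool)) ↔
      ∃ p : ℕ, 1 ≤ p ∧ ∀ x ∈ X, (fun i => x (i + (p : ℤ))) = x := by
  constructor
  · intro hW
    by_contra hnp
    have hsp : ∀ m : ℕ, ∃ x ∈ X, ∃ y ∈ X, (∀ j : ℕ, j < m → x j = y j) ∧ x m ≠ y m := by
      intro m
      by_contra hc
      apply hnp
      apply periodic_of_det X hXsh m
      intro x hx y hy hxy
      by_contra hne'
      exact hc ⟨x, hx, y, hy, hxy, hne'⟩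
    have hd : (fun i : ℤ => decide (i = 0)) ∈ WShiftZ X := by
      rintro w ⟨i, hi⟩
      obtain ⟨x, hx, y, hy, hxy, hm⟩ := hsp (-i).toNat
      apply mem_Wset_two X x y hx hy
      intro k hk
      rw [hi] at hk
      simp only [List.getElem?_ofFn] at hk
      split_ifs at hk with hkl
      simp at hk
      have hkm : k = (-i).toNat := by omega
      rw [← hkm] at hxy hm
      refine ⟨?_, hm⟩
      apply List.map_congr_left
      intro j hj
      exact hxy j (by simpa using hj)
    rw [hW] at hd
    have := congrFun hd 0
    simp at this
  · rintro ⟨p, hp, hX⟩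
    ext a
    simp only [Set.mem_singleton_iff]
    constructor
    · intro ha
      by_contra hna
      obtain ⟨i, hi⟩ := Function.ne_iff.1 hna
      have hi : a i = true := by simpa using hi
      let u : List Bool := List.ofFn fun j : Fin p => a (i - p + j.val)
      have hul : u.length = p := by simp [u]
      have hocc : occursZ (u ++ [true]) a := by
        refine ⟨i - p, ?_⟩
        apply List.ext_getElem
        · simp
        · intro k h1 h2
          simp only [List.getElem_ofFn]
          by_cases hk : k < p
          · rw [List.getElem_append_left (by omega)]
            simp [u]
          · have : k = p := by simp [hul] at h1; omega
            subst this
            rw [List.getElem_append_right (by omega)]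
            simp [hi]
      obtain ⟨sA, hsA⟩ := ha _ hocc
      have h1 := hsA (fun _ => false)
      have h2 := hsA (fun v => decide (v.length = p))
      unfold play at h1 h2
      rw [playAux_append] at h1 h2
      rw [← playAux_congr sA (fun _ => false) (fun v => decide (v.length = p)) u []
        (by intro v hv; simp [hul] at hv ⊢; omega)] at h2
      have hl := playAux_length sA (fun _ => false) u []
      simp only [List.length_nil, zero_add, hul] at hl
      simp only [playAux, if_true, hl, decide_true] at h1 h2
      have q1 := lang_periodic X p hp hX _ hl _ h1
      have q2 := lang_periodic X p hp hX _ hl _ h2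
      rw [q1] at q2
      simp at q2
    · rintro rfl
      rintro w ⟨i, hi⟩
      obtain ⟨x, hx⟩ := hne
      apply mem_Wset_two X x x hx hx
      intro k hk
      rw [hi] at hk
      rw [List.getElem?_ofFn] at hk
      simp at hk
end

section
/- Let X ⊆ S^ℕ be a one-directional subshift and set d = limsup_{n→∞} max{ |a|_B / n : a ∈ B_n(W(X)) }, where |a|_B denotes the number of occurrences of the letter B in a. Then h(X) ≥ d · log₂|S|. -/
/-- The prefix of length `n` of the play of the infinite ordered word game with
turn order `a : ℕ → Bool`. -/
def playPref {S : Type*} (sA sB : List S → S) (a : ℕ → Bool) : ℕ → List S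
  | 0 => []
  | n + 1 => playPref sA sB a n ++ [(if a n then sB else sA) (playPref sA sB a n)]

/-- The play of the infinite ordered word game: coordinate `i` is chosen by the player
`a i` as a function of the word `x_0 ⋯ x_{i-1}` built so far. -/
def playInf {S : Type*} (sA sB : List S → S) (a : ℕ → Bool) : ℕ → S :=
  fun i => (if a i then sB else sA) (playPref sA sB a i)

/-- The winning shift `W(X)` of a target set `X ⊆ S^ℕ`: the set of turn orders for
which `A` has a winning strategy in the infinite game. -/
def WShift {S : Type*} (X : Set (ℕ → S)) : Set (ℕ → Bool) :=
  { a | ∃ sA : List S → S, ∀ sB : List S → S, playInf sA sB a ∈ X }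

/-- The shift map on one-directional configurations. -/
def shiftN {S : Type*} (x : ℕ → S) : ℕ → S := fun i => x (i + 1)

/-- The language `B(X)` of a set of one-directional configurations: all finite words
occurring as factors of its elements. -/
def langN {S : Type*} (X : Set (ℕ → S)) : Set (List S) :=
  { w | ∃ x ∈ X, ∃ i : ℕ, w = List.ofFn fun j : Fin w.length => x (i + j.val) }

/-- The set `B_n(X)` of words of length `n` in the language of `X ⊆ S^ℕ`. -/
def langNn {S : Type*} (X : Set (ℕ → S)) (n : ℕ) : Set (List S) :=
  { w | w ∈ langN X ∧ w.length = n }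

/-- The entropy `h(X) = lim_n (1/n) log₂ |B_n(X)|` of a subshift `X ⊆ S^ℕ`
(stated via `limsup`; for subshifts the limit exists by subadditivity). -/
noncomputable def entropy {S : Type*} (X : Set (ℕ → S)) : ℝ :=
  Filter.atTop.limsup fun n : ℕ => Real.logb 2 ((langNn X n).ncard : ℝ) / (n : ℝ)

theorem aux_playPref_length {S : Type*} (sA sB : List S → S) (a : ℕ → Bool) (n : ℕ) :
    (playPref sA sB a n).length = n := by
  induction n with
  | zero => rfl
  | succ n ih => simp [playPref, ih]

theorem aux_finite {S : Type*} [Fintype S] (X : Set (ℕ → S)) (n : ℕ) :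
    (langNn X n).Finite :=
  (List.finite_length_eq S n).subset fun _ hw => hw.2

theorem aux_upper {S : Type*} [Fintype S] (X : Set (ℕ → S)) (n : ℕ) :
    (langNn X n).ncard ≤ Fintype.card S ^ n := by
  have h1 : langNn X n ⊆ Set.range (fun f : Fin n → S => List.ofFn f) := by
    rintro w ⟨_, rfl⟩
    exact ⟨fun i => w.get i, List.ofFn_get w⟩
  refine (Set.ncard_le_ncard h1 (Set.finite_range _)).trans ?_
  rw [← Set.image_univ]
  refine (Set.ncard_image_le Set.finite_univ).trans ?_
  rw [Set.ncard_univ, Nat.card_eq_fintype_card]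
  simp

theorem aux_count (n : ℕ) (f : Fin n → Bool) :
    (List.ofFn f).count true = (Finset.univ.filter fun j => f j = true).card := by
  induction n with
  | zero => simp
  | succ n ih =>
    rw [List.ofFn_succ, List.count_cons, ih, Fin.card_filter_univ_succ]
    cases h : f 0 <;> simp [Function.comp_def]

theorem aux_lower {S : Type*} [Fintype S] [Nonempty S] (X : Set (ℕ → S)) (w : List Bool)
    (hw : w ∈ langN (WShift X)) :
    Fintype.card S ^ (w.count true) ≤ (langNn X w.length).ncard := by
  classical
  obtain ⟨a, ⟨sA, hA⟩, i, hi⟩ := hw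
  obtain ⟨s0⟩ := ‹Nonempty S›
  set n := w.length with hn
  let T := {j : Fin n // a (i + j) = true}
  have hcount : w.count true = Fintype.card T := by
    rw [hi, aux_count, Fintype.card_subtype]
  let ext : (T → S) → ℕ → S := fun f k =>
    if h : ∃ t : T, i + t.1.val = k then f h.choose else s0
  have hext : ∀ f (t : T), ext f (i + t.1.val) = f t := by
    intro f t
    have h : ∃ t' : T, i + t'.1.val = i + t.1.val := ⟨t, rfl⟩
    simp only [ext, dif_pos h]
    congr 1
    apply Subtype.ext
    apply Fin.ext
    have := h.choose_spec
    omega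
  let pl : (T → S) → ℕ → S := fun f => playInf sA (fun v => ext f v.length) a
  have hpl : ∀ f (t : T), pl f (i + t.1.val) = f t := by
    intro f t
    simp only [pl, playInf, t.2, if_true, aux_playPref_length, hext]
  let F : (T → S) → List S := fun f => List.ofFn fun j : Fin n => pl f (i + j.val)
  have hFinj : Function.Injective F := by
    intro f g hfg
    have h := List.ofFn_injective hfg
    funext t
    rw [← hpl f t, ← hpl g t]
    exact congrFun h t.1
  have hsub : Set.range F ⊆ langNn X n := by
    rintro _ ⟨f, rfl⟩
    refine ⟨⟨pl f, hA _, i, ?_⟩, by simp [F]⟩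
    apply List.ext_getElem <;> simp [F]
  have h2 := Set.ncard_le_ncard hsub (aux_finite X n)
  rw [← Set.image_univ, Set.ncard_image_of_injective _ hFinj, Set.ncard_univ,
    Nat.card_eq_fintype_card, Fintype.card_fun] at h2
  rw [hcount]
  exact h2

/-- For a one-directional subshift `X ⊆ S^ℕ`, setting
`d = limsup_n max{ |a|_B / n : a ∈ B_n(W(X)) }`, we have `h(X) ≥ d·log₂|S|`. -/
theorem entropy_ge_density_mul_log {S : Type*} [Fintype S] [Nonempty S]
    [TopologicalSpace S] [DiscreteTopology S]
    (X : Set (ℕ → S)) (hXcl : IsClosed X) (hXsh : ∀ x ∈ X, shiftN x ∈ X)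
    (d : ℝ)
    (hd : d = Filter.atTop.limsup fun n : ℕ =>
      sSup { r : ℝ | ∃ a ∈ langN (WShift X), a.length = n ∧ r = (a.count true : ℝ) / (n : ℝ) }) :
    d * Real.logb 2 (Fintype.card S) ≤ entropy X := by
  subst hd
  set u : ℕ → ℝ := fun n =>
      sSup { r : ℝ | ∃ a ∈ langN (WShift X), a.length = n ∧ r = (a.count true : ℝ) / (n : ℝ) }
    with hu
  have hcard : (1 : ℝ) ≤ Fintype.card S := by exact_mod_cast Fintype.card_pos
  have hL : 0 ≤ Real.logb 2 (Fintype.card S) := Real.logb_nonneg (by norm_num) hcard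
  set L := Real.logb 2 (Fintype.card S) with hLdef
  have hv0 : ∀ n : ℕ, 0 ≤ Real.logb 2 ((langNn X n).ncard : ℝ) / (n : ℝ) := by
    intro n
    refine div_nonneg ?_ (Nat.cast_nonneg n)
    rcases Nat.eq_zero_or_pos (langNn X n).ncard with h | h
    · simp [h]
    · exact Real.logb_nonneg (by norm_num) (by exact_mod_cast h)
  have hv1 : ∀ n : ℕ, Real.logb 2 ((langNn X n).ncard : ℝ) / (n : ℝ) ≤ L := by
    intro n
    refine div_le_of_le_mul₀ (Nat.cast_nonneg n) hL ?_
    rcases Nat.eq_zero_or_pos (langNn X n).ncard with h | h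
    · simp only [h, Nat.cast_zero, Real.logb_zero]; positivity
    · rw [mul_comm, ← Real.logb_pow]
      exact Real.logb_le_logb_of_le (by norm_num) (by exact_mod_cast h)
        (by exact_mod_cast aux_upper X n)
  have hu0 : ∀ n, 0 ≤ u n := by
    intro n
    apply Real.sSup_nonneg
    rintro _ ⟨a, _, _, rfl⟩
    positivity
  have hu1 : ∀ n, u n ≤ 1 := by
    intro n
    apply Real.sSup_le _ zero_le_one
    rintro _ ⟨a, _, rfl, rfl⟩
    exact div_le_one_of_le₀ (by exact_mod_cast List.count_le_length) (Nat.cast_nonneg _)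
  have huv : ∀ n, u n * L ≤ Real.logb 2 ((langNn X n).ncard : ℝ) / (n : ℝ) := by
    intro n
    rcases hL.eq_or_lt with h | h
    · rw [← h, mul_zero]; exact hv0 n
    · rw [← le_div_iff₀ h]
      apply Real.sSup_le _ (div_nonneg (hv0 n) hL)
      rintro _ ⟨a, ha, rfl, rfl⟩
      rw [le_div_iff₀ h, div_mul_eq_mul_div]
      refine div_le_div_of_nonneg_right ?_ (Nat.cast_nonneg _)
      rw [hLdef, ← Real.logb_pow]
      exact Real.logb_le_logb_of_le (by norm_num) (by positivity)
        (by exact_mod_cast aux_lower X a ha)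
  have hmono : Monotone (fun x : ℝ => x * L) := fun x y hxy =>
    mul_le_mul_of_nonneg_right hxy hL
  have hub : Filter.atTop.IsBoundedUnder (· ≤ ·) u := Filter.isBoundedUnder_of ⟨1, hu1⟩
  have huc : Filter.atTop.IsCoboundedUnder (· ≤ ·) u :=
    (Filter.isBoundedUnder_of ⟨0, hu0⟩ : Filter.atTop.IsBoundedUnder (· ≥ ·) u).isCoboundedUnder_le
  have key := hmono.map_limsup_of_continuousAt (F := Filter.atTop) u
    (by fun_prop) hub huc
  refine (le_of_eq key).trans ?_
  unfold entropy
  refine Filter.limsup_le_limsup (Filter.Eventually.of_forall huv) ?_ ?_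
  · exact (Filter.isBoundedUnder_of ⟨0, fun n => mul_nonneg (hu0 n) hL⟩ :
      Filter.atTop.IsBoundedUnder (· ≥ ·) _).isCoboundedUnder_le
  · exact Filter.isBoundedUnder_of ⟨L, hv1⟩
end
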